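/- Let (B,+,0,−) be a uniquely 2-divisible K-loop and define s(x,y) = y + (−x + y). For a, b ∈ B, let h be the unique element with h + h = s(b, a/2). Then z = s(h, a/2) satisfies s(a, z) = b; that is, the midpoint of a and b is given explicitly by the formula m(a,b) = s( s(b, a/2)/2 , a/2 ). -/

import Mathlib

/-!
Write `σ_y x = y + (-x + y)`. The left Bol identity says that the left translations satisfy
`L (σ_y x) = L y * (L x)⁻¹ * L y`, so, as `L` is injective, identities between reflections can be
checked in the group of permutations. In particular `σ_y` is an involution, and `σ_z` with
`z = σ_y h` is the conjugate `σ_y ∘ σ_h ∘ σ_y`.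

The reflection in `a/2` exchanges `a` and `0`, so it carries the midpoint of `a` and `b` to the
midpoint of `0` and `σ_{a/2} b`, which is half of `σ_{a/2} b`.
-/

/-- A left Bol loop, written additively. The left inverse property replaces unique solvability,
which follows: `a + y = b` has the unique solution `y = -a + b`, and `x + a = b` has the unique
solution `x = -a + ((a + b) + -a)`. -/
class LeftBolLoop (B : Type*) extends AddZeroClass B, Neg B where
  protected neg_add_cancel_left (x y : B) : -x + (x + y) = y
  left_bol (x y z : B) : x + (y + (x + z)) = (x + (y + x)) + z

namespace LeftBolLoop

variable {B : Type*} [LeftBolLoop B]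

protected theorem neg_add_cancel (x : B) : -x + x = 0 := by
  simpa only [add_zero] using LeftBolLoop.neg_add_cancel_left x 0

protected theorem neg_neg (x : B) : -(-x) = x := by
  simpa only [LeftBolLoop.neg_add_cancel, add_zero] using
    LeftBolLoop.neg_add_cancel_left (-x) x

protected theorem add_neg_cancel_left (x y : B) : x + (-x + y) = y := by
  simpa only [LeftBolLoop.neg_neg] using LeftBolLoop.neg_add_cancel_left (-x) y

/-- The left translation `y ↦ x + y`, as an element of the permutation group of the loop. -/
def leftTranslation (x : B) : Equiv.Perm B where
  toFun y := x + y
  invFun y := -x + y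
  left_inv := LeftBolLoop.neg_add_cancel_left x
  right_inv := LeftBolLoop.add_neg_cancel_left x

theorem leftTranslation_apply (x y : B) : leftTranslation x y = x + y :=
  rfl

theorem leftTranslation_injective : Function.Injective (leftTranslation (B := B)) :=
  fun x y hxy => by
    simpa only [leftTranslation_apply, add_zero] using Equiv.congr_fun hxy 0

theorem leftTranslation_zero : leftTranslation (0 : B) = 1 :=
  Equiv.ext zero_add

theorem leftTranslation_add_self (x : B) :
    leftTranslation (x + x) = leftTranslation x * leftTranslation x :=
  Equiv.ext fun y => by
    simpa only [Equiv.Perm.mul_apply, leftTranslation_apply, zero_add] using (left_bol x 0 y).symm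

/-- The reflection of `x` in the point `y`; thus `reflect x y = z` says that `y` is a midpoint of
`x` and `z`. -/
def reflect (x y : B) : B :=
  y + (-x + y)

theorem leftTranslation_reflect (x y : B) :
    leftTranslation (reflect x y) =
      leftTranslation y * (leftTranslation x)⁻¹ * leftTranslation y :=
  Equiv.ext fun z => (left_bol y (-x) z).symm

theorem reflect_zero (x : B) : reflect 0 x = x + x :=
  leftTranslation_injective <| by
    rw [leftTranslation_reflect, leftTranslation_zero, leftTranslation_add_self, inv_one, mul_one]

theorem reflect_add_self (x : B) : reflect (x + x) x = 0 :=
  leftTranslation_injective <| by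
    rw [leftTranslation_reflect, leftTranslation_add_self, leftTranslation_zero]
    group

theorem reflect_reflect (x y : B) : reflect (reflect x y) y = x :=
  leftTranslation_injective <| by
    simp only [leftTranslation_reflect]
    group

theorem reflect_reflect_right (x y z : B) :
    reflect x (reflect y z) = reflect (reflect (reflect x z) y) z :=
  leftTranslation_injective <| by
    simp only [leftTranslation_reflect]
    group

end LeftBolLoop

open LeftBolLoop in
theorem kloop_explicit_midpoint_general {B : Type*} [LeftBolLoop B] {a b c h : B}
    (hc : c + c = a) (hh : h + h = reflect b c) : reflect a (reflect h c) = b :=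
  calc
    reflect a (reflect h c) = reflect (reflect (reflect a c) h) c := reflect_reflect_right a h c
    _ = reflect (reflect 0 h) c := by rw [← hc, reflect_add_self]
    _ = reflect (reflect b c) c := by rw [reflect_zero, hh]
    _ = b := reflect_reflect b c

/-- In a uniquely 2-divisible K-loop, the midpoint of `a` and `b`
is given explicitly by `m(a,b) = s(s(b, a/2)/2, a/2)`, where `s(x,y) = y + (−x + y)`. -/
theorem kloop_explicit_midpoint {B : Type*}
    (add : B → B → B) (zero : B) (neg : B → B)
    (h0l : ∀ a, add zero a = a)
    (h0r : ∀ a, add a zero = a)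
    (huniql : ∀ a b, ∃! x, add x a = b)
    (huniqr : ∀ a b, ∃! y, add a y = b)
    (hbol : ∀ a b c, add a (add b (add a c)) = add (add a (add b a)) c)
    (haut : ∀ a b, neg (add a b) = add (neg a) (neg b))
    (hnl : ∀ a, add (neg a) a = zero)
    (hnr : ∀ a, add a (neg a) = zero)
    (hlinv : ∀ a x, add (neg a) (add a x) = x)
    (hdiv : Function.Bijective (fun x : B => add x x))
    (s : B → B → B)
    (hs : ∀ x y, s x y = add y (add (neg x) y))
    (a b a2 h : B)
    (ha2 : add a2 a2 = a)          -- a2 = a/2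
    (hh : add h h = s b a2) :       -- h = s(b, a/2)/2
    s a (s h a2) = b := by
  let _ : LeftBolLoop B :=
    { add, zero, neg, zero_add := h0l, add_zero := h0r, neg_add_cancel_left := hlinv,
      left_bol := hbol }
  obtain rfl : s = LeftBolLoop.reflect := funext₂ hs
  exact kloop_explicit_midpoint_general ha2 hh
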